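/- Let S be a finite p-group acting on Λ by algebra automorphisms, where p = char k, and E = {e_1,...,e_n} a complete set of primitive orthogonal idempotents of Λ closed under the action of S, and suppose S acts freely on E. Then a finitely generated ΛS-module M is projective (respectively, injective) if and only if its restriction to Λ is a projective (respectively, injective) Λ-module; in particular, ΛS is self-injective if and only if Λ is self-injective. -/

import Mathlib

set_option maxHeartbeats 1000000

noncomputable section
open Finset
open scoped Classical


section CoreSGA

variable {k : Type} [CommRing k] {Λ : Type} [Ring Λ] [Algebra k Λ]
variable {G : Type} [Group G] [Fintype G]

/-- The skew group algebra `Λ ⊗_k kG` (as functions `G → Λ`), with multiplication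
`(λ ⊗ g) ⬝ (μ ⊗ h) = λ · g(μ) ⊗ gh`. -/
structure SGA (σ : G →* (Λ ≃ₐ[k] Λ)) : Type where
  toFun : G → Λ

namespace SGA

variable {σ : G →* (Λ ≃ₐ[k] Λ)}

@[simp] lemma mk_toFun (f : G → Λ) : (SGA.mk f : SGA σ).toFun = f := rfl

@[ext] lemma ext {f h : SGA σ} (w : ∀ g, f.toFun g = h.toFun g) : f = h := by
  cases f; cases h; simp only [mk.injEq]; funext g; exact w g

/-- The underlying-function equivalence. -/
def equivFun : SGA σ ≃ (G → Λ) := ⟨toFun, mk, fun _ => rfl, fun _ => rfl⟩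

instance : AddCommGroup (SGA σ) := (equivFun (σ := σ)).addCommGroup

@[simp] lemma toFun_add (f h : SGA σ) (g : G) : (f + h).toFun g = f.toFun g + h.toFun g := rfl
@[simp] lemma toFun_zero (g : G) : (0 : SGA σ).toFun g = 0 := rfl
@[simp] lemma toFun_neg (f : SGA σ) (g : G) : (-f).toFun g = -(f.toFun g) := rfl

instance : Mul (SGA σ) :=
  ⟨fun f h => ⟨fun x => ∑ g : G, f.toFun g * σ g (h.toFun (g⁻¹ * x))⟩⟩

instance : One (SGA σ) := ⟨⟨fun x => if x = 1 then 1 else 0⟩⟩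

@[simp] lemma toFun_mul (f h : SGA σ) (x : G) :
    (f * h).toFun x = ∑ g : G, f.toFun g * σ g (h.toFun (g⁻¹ * x)) := rfl

lemma toFun_one (x : G) : (1 : SGA σ).toFun x = if x = 1 then 1 else 0 := rfl

protected lemma one_mul (f : SGA σ) : 1 * f = f := by
  ext x
  rw [toFun_mul]
  rw [Finset.sum_eq_single (1 : G)]
  · simp [toFun_one]
  · intro b _ hb
    simp [toFun_one, hb]
  · simp

protected lemma mul_one (f : SGA σ) : f * 1 = f := by
  ext x
  rw [toFun_mul]
  rw [Finset.sum_eq_single (x : G)]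
  · simp [toFun_one]
  · intro b _ hb
    have : b⁻¹ * x ≠ 1 := by
      intro hc
      rw [inv_mul_eq_one] at hc
      exact hb hc
    simp [toFun_one, this]
  · simp

protected lemma mul_assoc (f h e : SGA σ) : f * h * e = f * (h * e) := by
  ext x
  rw [toFun_mul, toFun_mul]
  simp only [toFun_mul, Finset.sum_mul, map_sum, Finset.mul_sum, map_mul]
  rw [Finset.sum_comm]
  refine Finset.sum_congr rfl fun u _ => ?_
  rw [← Fintype.sum_equiv (Equiv.mulLeft u)
    (fun v => f.toFun u * σ u (h.toFun v) * σ (u * v) (e.toFun ((u * v)⁻¹ * x)))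
    (fun g => f.toFun u * σ u (h.toFun (u⁻¹ * g)) * σ g (e.toFun (g⁻¹ * x)))
    (fun v => by simp [Equiv.mulLeft])]
  refine Finset.sum_congr rfl fun v _ => ?_
  have h3 : (u * v)⁻¹ * x = v⁻¹ * (u⁻¹ * x) := by group
  have h4 : σ u (σ v (e.toFun (v⁻¹ * (u⁻¹ * x)))) = σ (u * v) (e.toFun (v⁻¹ * (u⁻¹ * x))) := by
    rw [map_mul σ]; rfl
  rw [h3, ← h4, mul_assoc]

protected lemma left_distrib (f h e : SGA σ) : f * (h + e) = f * h + f * e := by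
  ext x
  simp [mul_add, Finset.sum_add_distrib]

protected lemma right_distrib (f h e : SGA σ) : (f + h) * e = f * e + h * e := by
  ext x
  simp [add_mul, Finset.sum_add_distrib]

protected lemma zero_mul (f : SGA σ) : 0 * f = 0 := by
  ext x; simp

protected lemma mul_zero (f : SGA σ) : f * 0 = 0 := by
  ext x; simp

instance instRing : Ring (SGA σ) :=
  { (inferInstance : AddCommGroup (SGA σ)),
    (inferInstance : Mul (SGA σ)), (inferInstance : One (SGA σ)) with
    mul_assoc := SGA.mul_assoc
    one_mul := SGA.one_mul
    mul_one := SGA.mul_one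
    left_distrib := SGA.left_distrib
    right_distrib := SGA.right_distrib
    zero_mul := SGA.zero_mul
    mul_zero := SGA.mul_zero }

/-- The canonical inclusion `Λ → ΛG`, `λ ↦ λ ⊗ 1`. -/
def emb (σ : G →* (Λ ≃ₐ[k] Λ)) : Λ →+* SGA σ where
  toFun a := ⟨fun x => if x = 1 then a else 0⟩
  map_one' := rfl
  map_zero' := by ext x; simp
  map_add' a b := by ext x; by_cases hx : x = 1 <;> simp [hx]
  map_mul' a b := by
    ext x
    rw [toFun_mul]
    rw [Finset.sum_eq_single (1 : G)]
    · by_cases hx : x = 1 <;> simp [hx]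
    · intro b' _ hb'; simp [hb']
    · simp

end SGA

end CoreSGA

section GeneralDefs

/-- An idempotent `e` is primitive if it is nonzero and cannot be written as a sum of two
nonzero orthogonal idempotents. -/
def IsPrimitiveIdempotent (A : Type) [Ring A] (e : A) : Prop :=
  IsIdempotentElem e ∧ e ≠ 0 ∧
    ∀ f g : A, IsIdempotentElem f → IsIdempotentElem g → f * g = 0 → g * f = 0 →
      e = f + g → f = 0 ∨ g = 0

/-- A finite family `e : Fin n → A` is a complete set of primitive orthogonal idempotents. -/
def IsCompletePrimitiveOrthogonalSystem (A : Type) [Ring A] {n : ℕ} (e : Fin n → A) : Prop :=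
  (∀ i, IsPrimitiveIdempotent A (e i)) ∧
    (∀ i j, i ≠ j → e i * e j = 0) ∧ (∑ i, e i = 1)

/-- A ring is connected (indecomposable as an algebra) if its only central idempotents
are `0` and `1`. -/
def IsConnectedRing (A : Type) [Ring A] : Prop :=
  Nontrivial A ∧ ∀ e : A, IsIdempotentElem e → (∀ x : A, e * x = x * e) → e = 0 ∨ e = 1

/-- A ring is basic if it admits a complete set of primitive orthogonal idempotents `e i`
such that the indecomposable projective left modules `A e i` are pairwise nonisomorphic. -/
def IsBasicRing (A : Type) [Ring A] : Prop :=
  ∃ (n : ℕ) (e : Fin n → A), IsCompletePrimitiveOrthogonalSystem A e ∧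
    ∀ i j, i ≠ j →
      IsEmpty ((Submodule.span A {e i} : Submodule A A) ≃ₗ[A] (Submodule.span A {e j} : Submodule A A))

/-- `projDimLE A n M` : the `A`-module `M` admits a projective resolution of length at
most `n`, i.e. has projective dimension `≤ n`. -/
def projDimLE (A : Type) [Ring A] (n : ℕ) (M : Type) [AddCommGroup M] [Module A M] : Prop :=
  ∃ (P : ℕ → ModuleCat.{0} A) (d : (i : ℕ) → (P (i + 1) →ₗ[A] P i)) (ε : P 0 →ₗ[A] M),
    (∀ i, Module.Projective A (P i)) ∧
    Function.Surjective ε ∧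
    LinearMap.range (d 0) = LinearMap.ker ε ∧
    (∀ i, LinearMap.range (d (i + 1)) = LinearMap.ker (d i)) ∧
    (∀ i, n < i → ∀ x : P i, x = 0)

/-- The (little) global dimension of a ring, as an element of `ℕ∞`: the least `n` such that
every finitely generated `A`-module has projective dimension at most `n` (and `⊤` if there
is no such `n`). -/
noncomputable def globalDim (A : Type) [Ring A] : ℕ∞ :=
  sInf {c : ℕ∞ | ∃ n : ℕ, c = (n : ℕ∞) ∧
    ∀ (M : Type) [AddCommGroup M] [Module A M], Module.Finite A M → projDimLE A n M}

/-- A module is indecomposable if it is nonzero and is not the internal direct sum of two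
nonzero submodules. -/
def IsIndecomposableModule (A : Type) [Ring A] (M : Type) [AddCommGroup M] [Module A M] : Prop :=
  Nontrivial M ∧ ∀ N₁ N₂ : Submodule A M, IsCompl N₁ N₂ → N₁ = ⊥ ∨ N₂ = ⊥

/-- A ring has finite representation type if there are only finitely many isomorphism classes
of finitely generated indecomposable left modules. -/
def FiniteRepType (A : Type) [Ring A] : Prop :=
  ∃ S : Set (Σ m : ℕ, Submodule A (Fin m → A)), S.Finite ∧
    ∀ (M : Type) [AddCommGroup M] [Module A M], Module.Finite A M →
      IsIndecomposableModule A M →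
        ∃ p ∈ S, Nonempty (M ≃ₗ[A] ((Fin p.1 → A) ⧸ p.2))

/-- Two rings are Morita equivalent if their categories of modules are equivalent. -/
def MoritaEquivalent (A B : Type) [Ring A] [Ring B] : Prop :=
  Nonempty (ModuleCat.{0} A ≌ ModuleCat.{0} B)

/-- An Auslander algebra: global dimension at most `2`, and there is an exact sequence
`0 → A → I₀ → I₁` with `I₀`, `I₁` both projective and injective (equivalently, in a minimal
injective resolution `0 → A → I₀ → I₁ → I₂ → 0` the terms `I₀` and `I₁` are projective). -/
def IsAuslanderAlgebra (A : Type) [Ring A] : Prop :=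
  globalDim A ≤ 2 ∧
    ∃ (I₀ I₁ : ModuleCat.{0} A) (f : A →ₗ[A] I₀) (g : I₀ →ₗ[A] I₁),
      Module.Injective A I₀ ∧ Module.Projective A I₀ ∧
      Module.Injective A I₁ ∧ Module.Projective A I₁ ∧
      Function.Injective f ∧ LinearMap.ker g = LinearMap.range f

/-- The `i`-th power of a left ideal (with `I ^ 0 = ⊤`). -/
def leftIdealPow (A : Type) [Ring A] (I : Submodule A A) : ℕ → Submodule A A
  | 0 => ⊤
  | n + 1 => Submodule.span A {x : A | ∃ a ∈ I, ∃ b ∈ leftIdealPow A I n, x = a * b}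

end GeneralDefs
section Restriction

/-- Restriction of scalars along a ring homomorphism, as a type synonym. -/
def Res {A B : Type} [Ring A] [Ring B] (φ : A →+* B) (M : Type) : Type := M

instance {A B : Type} [Ring A] [Ring B] (φ : A →+* B) (M : Type) [AddCommGroup M] :
    AddCommGroup (Res φ M) := inferInstanceAs (AddCommGroup M)

instance {A B : Type} [Ring A] [Ring B] (φ : A →+* B) (M : Type) [AddCommGroup M] [Module B M] :
    Module A (Res φ M) := Module.compHom M φ

end Restriction

section Induction

variable {A B : Type} [Ring A] [Ring B] (φ : A →+* B)
variable (V : Type) [AddCommGroup V] [Module A V]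

/-- The submodule of relations defining the induced module `B ⊗_A V`. -/
def inducedRelations : Submodule B (V →₀ B) :=
  Submodule.span B
    {z | ∃ (a : A) (v : V), z = Finsupp.single (a • v) (1 : B) - Finsupp.single v (φ a)}

/-- The induced module `B ⊗_A V` along `φ : A →+* B`, realized as a quotient of the free
module on `V`. -/
def Induced : Type := (V →₀ B) ⧸ inducedRelations φ V

instance : AddCommGroup (Induced φ V) :=
  inferInstanceAs (AddCommGroup ((V →₀ B) ⧸ inducedRelations φ V))

instance : Module B (Induced φ V) :=
  inferInstanceAs (Module B ((V →₀ B) ⧸ inducedRelations φ V))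

end Induction

/-!
Let `J` be the radical of `Λ`. Since the group permutes the idempotents of `E` freely, the sum `ε`
of orbit representatives is an idempotent of trace `∑ g, g(ε) = 1`, and since `Λ` is basic, the
`g(ε)` are central modulo `J`. If `l` is a `Λ`-linear map between `ΛG`-modules whose conjugates
`g l g⁻¹` differ from `l` by maps killed by `J`, then `∑ g, g(ε) · g l g⁻¹` is therefore
`ΛG`-linear. Thus a lift along a surjection, or an extension along an injection, that exists over
`Λ` also exists over `ΛG` as soon as `J` kills the kernel, respectively the cokernel; the general
case follows by dévissage, because `J` is nilpotent and stable under the group.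
-/

section Indecomposable

variable {A : Type} [Ring A] {P Q : Type} [AddCommGroup P] [Module A P] [AddCommGroup Q]
  [Module A Q] {T : Type*} [AddCommGroup T] [Module A T]

theorem IsIndecomposableModule.isNilpotent_or_bijective [IsArtinian A P] [IsNoetherian A P]
    (hP : IsIndecomposableModule A P) (f : Module.End A P) :
    IsNilpotent f ∨ Function.Bijective f := by
  obtain ⟨n, hn⟩ := Filter.eventually_atTop.mp f.eventually_isCompl_ker_pow_range_pow
  rcases hP.2 _ _ (hn (n + 1) n.le_succ) with hker | hrange
  · right
    have hinj : Function.Injective (f ^ (n + 1)) := LinearMap.ker_eq_bot.mp hker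
    rw [pow_succ, Module.End.mul_eq_comp, LinearMap.coe_comp] at hinj
    exact IsArtinian.bijective_of_injective_endomorphism f hinj.of_comp
  · exact Or.inl ⟨n + 1, LinearMap.range_eq_bot.mp hrange⟩

theorem IsIndecomposableModule.bijective_of_comp_eq [IsArtinian A P] [IsNoetherian A P]
    (hP : IsIndecomposableModule A P) {π : P →ₗ[A] T} (hπ : π ≠ 0) {f : Module.End A P}
    (hf : π ∘ₗ f = π) : Function.Bijective f := by
  refine (hP.isNilpotent_or_bijective f).resolve_left ?_
  rintro ⟨n, hn⟩
  have hpow : ∀ m : ℕ, π ∘ₗ (f ^ m) = π := by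
    intro m
    induction m with
    | zero => rfl
    | succ m ih => rw [pow_succ, Module.End.mul_eq_comp, ← LinearMap.comp_assoc, ih, hf]
  exact hπ (by rw [← hpow n, hn, LinearMap.comp_zero])

theorem IsIndecomposableModule.nonempty_linearEquiv [IsArtinian A P] [IsNoetherian A P]
    [IsArtinian A Q] [IsNoetherian A Q] [Module.Projective A P] [Module.Projective A Q]
    (hP : IsIndecomposableModule A P) (hQ : IsIndecomposableModule A Q) [Nontrivial T]
    {π : P →ₗ[A] T} {ρ : Q →ₗ[A] T} (hπ : Function.Surjective π) (hρ : Function.Surjective ρ) :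
    Nonempty (P ≃ₗ[A] Q) := by
  obtain ⟨u, hu⟩ := Module.projective_lifting_property ρ π hρ
  obtain ⟨v, hv⟩ := Module.projective_lifting_property π ρ hπ
  have hvu : Function.Bijective (v ∘ₗ u) :=
    hP.bijective_of_comp_eq (LinearMap.ne_zero_of_surjective hπ)
      (by rw [← LinearMap.comp_assoc, hv, hu])
  have huv : Function.Bijective (u ∘ₗ v) :=
    hQ.bijective_of_comp_eq (LinearMap.ne_zero_of_surjective hρ)
      (by rw [← LinearMap.comp_assoc, hu, hv])
  rw [LinearMap.coe_comp] at hvu huv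
  exact ⟨LinearEquiv.ofBijective u ⟨hvu.1.of_comp, huv.2.of_comp⟩⟩

end Indecomposable

section PrimitiveIdempotent

variable {A : Type} [Ring A] {e : A} {T : Type*} [AddCommGroup T] [Module A T]

/-- The evaluation `a ↦ a • t` on the left ideal `Ae`. -/
def evalSpan (e : A) (t : T) : (Submodule.span A {e} : Submodule A A) →ₗ[A] T :=
  LinearMap.toSpanSingleton A T t ∘ₗ Submodule.subtype _

theorem evalSpan_surjective [IsSimpleModule A T] {t : T} (ht : e • t ≠ 0) :
    Function.Surjective (evalSpan e t) :=
  LinearMap.surjective_of_ne_zero fun h =>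
    ht (LinearMap.congr_fun h ⟨e, Submodule.mem_span_singleton_self e⟩)

theorem mul_eq_self_of_mem_span_idempotent (he : IsIdempotentElem e) {a : A}
    (ha : a ∈ (Submodule.span A {e} : Submodule A A)) : a * e = a := by
  obtain ⟨b, rfl⟩ := Submodule.mem_span_singleton.mp ha
  rw [smul_eq_mul, mul_assoc, he]

theorem projective_span_of_isIdempotentElem (he : IsIdempotentElem e) :
    Module.Projective A (Submodule.span A {e} : Submodule A A) :=
  Module.Projective.of_split (Submodule.subtype _)
    ((LinearMap.toSpanSingleton A A e).codRestrict _ fun a =>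
      Submodule.mem_span_singleton.mpr ⟨a, rfl⟩)
    (LinearMap.ext fun a => Subtype.ext (mul_eq_self_of_mem_span_idempotent he a.2))

theorem IsPrimitiveIdempotent.isIndecomposableModule_span (he : IsPrimitiveIdempotent A e) :
    IsIndecomposableModule A (Submodule.span A {e} : Submodule A A) := by
  obtain ⟨hee, hne, hprim⟩ := he
  let E : (Submodule.span A {e} : Submodule A A) := ⟨e, Submodule.mem_span_singleton_self e⟩
  have smul_E (x : (Submodule.span A {e} : Submodule A A)) : (x : A) • E = x :=
    Subtype.ext (mul_eq_self_of_mem_span_idempotent hee x.2)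
  have orthogonal {N N' : Submodule A (Submodule.span A {e} : Submodule A A)} (h : Disjoint N N')
      {x y} (hx : x ∈ N) (hy : y ∈ N') (hxy : x + y = E) : (x : A) • y = 0 ∧ (x : A) • x = x := by
    have hsum : (x : A) • x + (x : A) • y = x := by rw [← smul_add, hxy, smul_E]
    have hzero : (x : A) • y = 0 := by
      refine Submodule.disjoint_def.mp h _ ?_ (N'.smul_mem _ hy)
      rw [eq_sub_of_add_eq' hsum]
      exact N.sub_mem hx (N.smul_mem _ hx)
    exact ⟨hzero, by rwa [hzero, add_zero] at hsum⟩
  have eq_bot {N N' : Submodule A (Submodule.span A {e} : Submodule A A)} (h : Disjoint N N')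
      (hE : E ∈ N') : N = ⊥ := by
    have hN' : N' = ⊤ := Submodule.eq_top_iff'.mpr fun x => smul_E x ▸ N'.smul_mem (x : A) hE
    rwa [hN', disjoint_top] at h
  refine ⟨⟨E, 0, fun h => hne (congrArg Subtype.val h)⟩, fun N₁ N₂ hN => ?_⟩
  obtain ⟨x, hx, y, hy, hxy⟩ :=
    Submodule.mem_sup.mp (hN.sup_eq_top ▸ Submodule.mem_top : E ∈ N₁ ⊔ N₂)
  obtain ⟨hxy₀, hxx⟩ := orthogonal hN.disjoint hx hy hxy
  obtain ⟨hyx₀, hyy⟩ := orthogonal hN.disjoint.symm hy hx ((add_comm _ _).trans hxy)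
  rcases hprim x y (congrArg Subtype.val hxx) (congrArg Subtype.val hyy)
    (congrArg Subtype.val hxy₀) (congrArg Subtype.val hyx₀) (congrArg Subtype.val hxy.symm)
    with h | h
  · exact Or.inl (eq_bot hN.disjoint (by rwa [← hxy, (Subtype.ext h : x = 0), zero_add]))
  · exact Or.inr (eq_bot hN.disjoint.symm (by rwa [← hxy, (Subtype.ext h : y = 0), add_zero]))

end PrimitiveIdempotent

section Basic

variable {A : Type} [Ring A] [IsArtinianRing A] {e : A} {T : Type*} [AddCommGroup T] [Module A T]

theorem IsPrimitiveIdempotent.smul_eq_zero_or_smul_eq_self (he : IsPrimitiveIdempotent A e)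
    (hT : ∀ t : T, e • t = t) {f : A} (hf : IsIdempotentElem f) :
    (∀ t : T, f • t = 0) ∨ ∀ t : T, f • t = t := by
  let r : Module.End A (Submodule.span A {e} : Submodule A A) :=
    evalSpan e ⟨e * f * e, Submodule.mem_span_singleton.mpr ⟨e * f, rfl⟩⟩
  have hr (t : T) : evalSpan e t ∘ₗ r = evalSpan e (f • t) := by
    ext a
    change ((a : A) * (e * f * e)) • t = (a : A) • f • t
    simp only [mul_smul, hT]
  by_cases hzero : ∀ t : T, f • t = 0
  · exact Or.inl hzero
  · right
    obtain ⟨t, ht⟩ := not_forall.mp hzero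
    have ne_zero {s : T} (hs : s ≠ 0) : evalSpan e s ≠ 0 := fun h =>
      hs ((hT s).symm.trans (LinearMap.congr_fun h ⟨e, Submodule.mem_span_singleton_self e⟩))
    have hbij : Function.Bijective r :=
      he.isIndecomposableModule_span.bijective_of_comp_eq (ne_zero ht)
        (by rw [hr, ← mul_smul, hf])
    intro s
    by_contra hs
    refine ne_zero (sub_ne_zero.mpr hs) ((LinearMap.cancel_right hbij.2).mp ?_)
    rw [hr, smul_sub, ← mul_smul, hf, sub_self, LinearMap.zero_comp]
    exact LinearMap.ext fun a => smul_zero (a : A)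

theorem IsBasicRing.exists_primitive_smul_eq_self (hA : IsBasicRing A) (T : Type*) [AddCommGroup T]
    [Module A T] [IsSimpleModule A T] :
    ∃ e : A, IsPrimitiveIdempotent A e ∧ ∀ t : T, e • t = t := by
  obtain ⟨n, e, ⟨hprim, -, hsum⟩, hiso⟩ := hA
  have sum_smul (t : T) : ∑ i, e i • t = t := by rw [← Finset.sum_smul, hsum, one_smul]
  have _ (i) := projective_span_of_isIdempotentElem (hprim i).1
  have _ := IsSimpleModule.nontrivial A T
  obtain ⟨t, ht⟩ := exists_ne (0 : T)
  obtain ⟨i, -, hi⟩ := Finset.exists_ne_zero_of_sum_ne_zero ((sum_smul t).symm ▸ ht)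
  have smul_eq_zero (j) (hj : j ≠ i) (s : T) : e j • s = 0 := by
    by_contra hs
    obtain ⟨iso⟩ := (hprim i).isIndecomposableModule_span.nonempty_linearEquiv
      (hprim j).isIndecomposableModule_span (evalSpan_surjective hi) (evalSpan_surjective hs)
    exact (hiso i j hj.symm).false iso
  refine ⟨e i, hprim i, fun s => ?_⟩
  rw [← Fintype.sum_eq_single i fun j hj => smul_eq_zero j hj s, sum_smul]

theorem IsBasicRing.commutator_mem_jacobson (hA : IsBasicRing A) {f : A} (hf : IsIdempotentElem f)
    (x : A) : f * x - x * f ∈ Ring.jacobson A := by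
  rw [Ring.jacobson, Module.jacobson, Submodule.mem_sInf]
  intro m hm
  have : IsSimpleModule A (A ⧸ m) := isSimpleModule_iff_isCoatom.mpr hm
  obtain ⟨e, he, heT⟩ := hA.exists_primitive_smul_eq_self (A ⧸ m)
  have hmk (a : A) : (Submodule.Quotient.mk a : A ⧸ m) = a • Submodule.Quotient.mk 1 := by
    rw [← Submodule.Quotient.mk_smul, smul_eq_mul, mul_one]
  rw [← Submodule.Quotient.mk_eq_zero, hmk, sub_smul, mul_smul, mul_smul]
  rcases he.smul_eq_zero_or_smul_eq_self heT hf with h | h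
  · rw [h, h, smul_zero, sub_zero]
  · rw [h, h, sub_self]

end Basic

section FreeAction

theorem exists_finset_sum_smul_eq_sum {G ι N : Type*} [Group G] [Fintype G] [MulAction G ι]
    [Fintype ι] [AddCommMonoid N] (hfree : ∀ (g : G) (i : ι), g • i = i → g = 1) (v : ι → N) :
    ∃ s : Finset ι, ∑ g : G, ∑ i ∈ s, v (g • i) = ∑ i, v i := by
  let r := MulAction.orbitRel G ι
  refine ⟨Finset.univ.image fun q : Quotient r => q.out, ?_⟩
  simp_rw [Finset.sum_image fun _ _ _ _ hab => Quotient.out_injective hab]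
  rw [← Fintype.sum_prod_type']
  refine Fintype.sum_bijective (fun x : G × Quotient r => x.1 • x.2.out) ⟨?_, fun i => ?_⟩ _ _
    fun _ => rfl
  · rintro ⟨g, q⟩ ⟨h, q'⟩ (hgh : g • q.out = h • q'.out)
    obtain rfl : q = q' := by
      rw [← q.out_eq, ← q'.out_eq]
      exact Quotient.sound ⟨g⁻¹ * h, by simp only [mul_smul, ← hgh, inv_smul_smul]⟩
    have : h⁻¹ * g = 1 := hfree _ q.out (by rw [mul_smul, hgh, inv_smul_smul])
    rw [inv_mul_eq_one.mp this]
  · obtain ⟨g, hg : g • i = _⟩ := Quotient.mk_out (s := r) i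
    exact ⟨(g⁻¹, Quotient.mk r i), by simp only [← hg, inv_smul_smul]⟩

variable {k Λ G ι : Type*} [CommRing k] [Ring Λ] [Algebra k Λ] [Group G] {σ : G →* (Λ ≃ₐ[k] Λ)}
  {e : ι → Λ}

theorem injective_of_free [Nontrivial G] (he : OrthogonalIdempotents e)
    (hfree : ∀ g : G, g ≠ 1 → ∀ i, σ g (e i) ≠ e i) : Function.Injective e := by
  intro i j hij
  by_contra hne
  obtain ⟨g, hg⟩ := exists_ne (1 : G)
  have hzero : e i = 0 := by rw [← (he.idem i).eq, ← he.ortho hne, ← hij]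
  exact hfree g hg i (by rw [hzero, map_zero])

theorem exists_isIdempotentElem_sum_eq_one [Fintype G] [Fintype ι]
    (he : CompleteOrthogonalIdempotents e) (hclosed : ∀ g i, ∃ j, σ g (e i) = e j)
    (hfree : ∀ g, g ≠ 1 → ∀ i, σ g (e i) ≠ e i) :
    ∃ ε : Λ, IsIdempotentElem ε ∧ ∑ g, σ g ε = 1 := by
  cases subsingleton_or_nontrivial G
  · exact ⟨1, .one, by rw [Fintype.sum_subsingleton _ 1, map_one]⟩
  have hinj : Function.Injective e := injective_of_free he.toOrthogonalIdempotents hfree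
  choose act hact using hclosed
  let _ : SMul G ι := ⟨act⟩
  have map_idem : ∀ g i, σ g (e i) = e (g • i) := hact
  let _ : MulAction G ι :=
    { one_smul i := hinj (by rw [← map_idem, map_one, AlgEquiv.one_apply])
      mul_smul g h i := hinj (by simp_rw [← map_idem, map_mul, AlgEquiv.mul_apply]) }
  have stabilizer_trivial (g : G) (i : ι) (hgi : g • i = i) : g = 1 :=
    by_contra fun hg => hfree g hg i (by rw [map_idem, hgi])
  obtain ⟨s, hs⟩ := exists_finset_sum_smul_eq_sum stabilizer_trivial e
  refine ⟨∑ i ∈ s, e i, he.isIdempotentElem_sum, ?_⟩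
  simp_rw [map_sum, map_idem]
  exact hs.trans he.complete

end FreeAction

section NilpotentIdeal

universe u

variable {R : Type u} [Ring R] {I : Ideal R} {M : Type u} [AddCommGroup M] [Module R M]

theorem exists_lift_of_pow_smul_ker_eq_bot
    (hlift : ∀ {X Y : Type u} [AddCommGroup X] [AddCommGroup Y] [Module R X] [Module R Y]
      (π : X →ₗ[R] Y) (f : M →ₗ[R] Y), Function.Surjective π → I • LinearMap.ker π = ⊥ →
        ∃ l : M →ₗ[R] X, π ∘ₗ l = f) (n : ℕ)
    {X Y : Type u} [AddCommGroup X] [AddCommGroup Y] [Module R X] [Module R Y]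
    (π : X →ₗ[R] Y) (f : M →ₗ[R] Y) (hπ : Function.Surjective π)
    (hker : I ^ n • LinearMap.ker π = ⊥) : ∃ l : M →ₗ[R] X, π ∘ₗ l = f := by
  induction n generalizing X Y with
  | zero =>
    refine hlift π f hπ ?_
    rw [Submodule.pow_zero, Ideal.one_eq_top, Submodule.top_smul] at hker
    rw [hker, Submodule.smul_bot]
  | succ n ih =>
    let N : Submodule R X := I • LinearMap.ker π
    have hN : N ≤ LinearMap.ker π := Submodule.smul_le_right
    have hkerN : I • LinearMap.ker (N.liftQ π hN) = ⊥ := by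
      rw [Submodule.ker_liftQ, ← Submodule.map_smul'']
      exact N.mkQ_map_self
    obtain ⟨l₁, hl₁⟩ :=
      hlift (N.liftQ π hN) f (fun y => (hπ y).imp' N.mkQ fun _ hx => hx) hkerN
    obtain ⟨l₂, hl₂⟩ := ih N.mkQ l₁ N.mkQ_surjective
      (by rw [Submodule.ker_mkQ, ← Submodule.mul_smul, ← Submodule.pow_succ, hker])
    exact ⟨l₂, by rw [← N.liftQ_mkQ π hN, LinearMap.comp_assoc, hl₂, hl₁]⟩

theorem projective_of_exists_lift_of_isNilpotent (hI : IsNilpotent I)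
    (hlift : ∀ {X Y : Type u} [AddCommGroup X] [AddCommGroup Y] [Module R X] [Module R Y]
      (π : X →ₗ[R] Y) (f : M →ₗ[R] Y), Function.Surjective π → I • LinearMap.ker π = ⊥ →
        ∃ l : M →ₗ[R] X, π ∘ₗ l = f) : Module.Projective R M := by
  obtain ⟨n, hn⟩ := hI
  refine Module.Projective.of_lifting_property'' fun π hπ => ?_
  exact exists_lift_of_pow_smul_ker_eq_bot hlift n π LinearMap.id hπ
    (by rw [hn, Submodule.zero_eq_bot, Submodule.bot_smul])

theorem exists_extend_of_pow_smul_top_le_range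
    (hextend : ∀ {X Y : Type u} [AddCommGroup X] [AddCommGroup Y] [Module R X] [Module R Y]
      (i : X →ₗ[R] Y) (f : X →ₗ[R] M), Function.Injective i → I • ⊤ ≤ LinearMap.range i →
        ∃ l : Y →ₗ[R] M, l ∘ₗ i = f) (n : ℕ)
    {X Y : Type u} [AddCommGroup X] [AddCommGroup Y] [Module R X] [Module R Y]
    (i : X →ₗ[R] Y) (f : X →ₗ[R] M) (hi : Function.Injective i)
    (hrange : I ^ n • ⊤ ≤ LinearMap.range i) : ∃ l : Y →ₗ[R] M, l ∘ₗ i = f := by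
  induction n generalizing X Y with
  | zero =>
    refine hextend i f hi (Submodule.smul_le_right.trans ?_)
    rwa [Submodule.pow_zero, Ideal.one_eq_top, Submodule.top_smul] at hrange
  | succ n ih =>
    let N : Submodule R Y := LinearMap.range i ⊔ I • ⊤
    have hiN (x : X) : i x ∈ N := Submodule.mem_sup_left (LinearMap.mem_range_self i x)
    have hrangeN : I ^ n • ⊤ ≤ LinearMap.range (i.codRestrict N hiN) := by
      rw [LinearMap.range_codRestrict, ← Submodule.map_le_iff_le_comap, Submodule.map_smul'',
        Submodule.map_subtype_top, Submodule.smul_sup, ← Submodule.mul_smul, ← Submodule.pow_succ]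
      exact sup_le Submodule.smul_le_right hrange
    obtain ⟨l₁, hl₁⟩ := ih (i.codRestrict N hiN) f
      (fun x y hxy => hi (congrArg Subtype.val hxy)) hrangeN
    obtain ⟨l₂, hl₂⟩ := hextend N.subtype l₁ N.injective_subtype
      (by rw [Submodule.range_subtype]; exact le_sup_right)
    exact ⟨l₂, by rw [← hl₁, ← hl₂, LinearMap.comp_assoc, LinearMap.subtype_comp_codRestrict]⟩

theorem injective_of_exists_extend_of_isNilpotent (hI : IsNilpotent I)
    (hextend : ∀ {X Y : Type u} [AddCommGroup X] [AddCommGroup Y] [Module R X] [Module R Y]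
      (i : X →ₗ[R] Y) (f : X →ₗ[R] M), Function.Injective i → I • ⊤ ≤ LinearMap.range i →
        ∃ l : Y →ₗ[R] M, l ∘ₗ i = f) : Module.Injective R M := by
  obtain ⟨n, hn⟩ := hI
  refine ⟨fun X Y _ _ _ _ i hi f => ?_⟩
  obtain ⟨l, hl⟩ := exists_extend_of_pow_smul_top_le_range hextend n i f hi
    (by rw [hn, Submodule.zero_eq_bot, Submodule.bot_smul]; exact bot_le)
  exact ⟨l, LinearMap.congr_fun hl⟩

end NilpotentIdeal

universe v

theorem injective_of_leftInverse {R : Type*} {M N : Type v} [Ring R] [AddCommGroup M]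
    [Module R M] [AddCommGroup N] [Module R N] [Module.Injective R N] (s : M →ₗ[R] N)
    (r : N →ₗ[R] M) (hrs : Function.LeftInverse r s) : Module.Injective R M := by
  refine ⟨fun X Y _ _ _ _ i hi f => ?_⟩
  obtain ⟨l, hl⟩ := Module.Injective.out i hi (s ∘ₗ f)
  exact ⟨r ∘ₗ l, fun x => by rw [LinearMap.comp_apply, hl, LinearMap.comp_apply, hrs]⟩

section RestrictionOfScalars

variable {A B : Type} [Ring A] [Ring B] (φ : A →+* B) {M N : Type} [AddCommGroup M] [Module B M]
  [AddCommGroup N] [Module B N]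

/-- Restriction of scalars on morphisms. -/
def Res.map (f : M →ₗ[B] N) : Res φ M →ₗ[A] Res φ N where
  toFun := f
  map_add' := f.map_add
  map_smul' a := f.map_smul (φ a)

/-- A ring homomorphism `φ : A → B`, as an `A`-linear map into the restriction of `B`. -/
def Res.linearMapOfRingHom : A →ₗ[A] Res φ B where
  toFun := φ
  map_add' := φ.map_add
  map_smul' := φ.map_mul

theorem Res.projective [Module.Projective A (Res φ B)] [Module.Projective B M] :
    Module.Projective A (Res φ M) := by
  obtain ⟨s, hs⟩ := Module.projective_def'.mp (inferInstance : Module.Projective B M)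
  have _ : Module.Projective A (Res φ (M →₀ B)) :=
    .of_equiv (finsuppLequivDFinsupp A (M := Res φ B) (ι := M)).symm
  exact Module.Projective.of_split (Res.map φ s)
    (Res.map φ (Finsupp.linearCombination B id)) (LinearMap.ext fun m => LinearMap.congr_fun hs m)

end RestrictionOfScalars

namespace SGA

variable {k Λ G : Type} [CommRing k] [Ring Λ] [Algebra k Λ] [Group G] [Fintype G]
  {σ : G →* (Λ ≃ₐ[k] Λ)}

theorem emb_toFun (a : Λ) (x : G) : (emb σ a).toFun x = if x = 1 then a else 0 := rfl

theorem emb_mul_toFun (a : Λ) (b : SGA σ) (x : G) : (emb σ a * b).toFun x = a * b.toFun x := by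
  rw [toFun_mul, Finset.sum_eq_single 1]
  · simp [emb_toFun]
  · intro g _ hg
    simp [emb_toFun, hg]
  · simp

/-- The group elements `1 ⊗ g` of the skew group algebra. -/
def of (σ : G →* (Λ ≃ₐ[k] Λ)) : G →* SGA σ where
  toFun g := ⟨fun x => if x = g then 1 else 0⟩
  map_one' := rfl
  map_mul' g h := by
    ext x
    rw [toFun_mul, Finset.sum_eq_single g]
    · simp only [inv_mul_eq_iff_eq_mul, if_true, one_mul]
      split_ifs <;> simp
    · intro y _ hy
      simp [hy]
    · simp

theorem of_toFun (g x : G) : (of σ g).toFun x = if x = g then 1 else 0 := rfl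

theorem of_mul_toFun (g : G) (b : SGA σ) (x : G) :
    (of σ g * b).toFun x = σ g (b.toFun (g⁻¹ * x)) := by
  rw [toFun_mul, Finset.sum_eq_single g]
  · simp [of_toFun]
  · intro y _ hy
    simp [of_toFun, hy]
  · simp

theorem of_mul_emb (g : G) (a : Λ) : of σ g * emb σ a = emb σ (σ g a) * of σ g := by
  ext x
  rw [of_mul_toFun, emb_mul_toFun, of_toFun, emb_toFun]
  simp only [inv_mul_eq_one, eq_comm (a := g)]
  split_ifs <;> simp

theorem sum_toFun {ι : Type*} (s : Finset ι) (f : ι → SGA σ) (x : G) :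
    (∑ i ∈ s, f i).toFun x = ∑ i ∈ s, (f i).toFun x :=
  map_sum (⟨⟨fun b : SGA σ => b.toFun x, rfl⟩, fun _ _ => rfl⟩ : SGA σ →+ Λ) f s

theorem sum_emb_mul_of (b : SGA σ) : ∑ g, emb σ (b.toFun g) * of σ g = b := by
  ext x
  simp only [sum_toFun, emb_mul_toFun, of_toFun, mul_ite, mul_one, mul_zero,
    Finset.sum_ite_eq, Finset.mem_univ, if_true]

omit [Fintype G] in
theorem map_inv_apply_map_apply (g : G) (a : Λ) : σ g (σ g⁻¹ a) = a := by
  rw [map_inv, AlgEquiv.aut_inv, AlgEquiv.apply_symm_apply]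

theorem mem_map_emb_iff {I : Ideal Λ} {b : SGA σ} :
    b ∈ Ideal.map (emb σ) I ↔ ∀ g, σ g⁻¹ (b.toFun g) ∈ I := by
  constructor
  · intro hb
    induction hb using Submodule.span_induction with
    | mem _ h =>
      obtain ⟨a, ha, rfl⟩ := h
      intro g
      rw [emb_toFun]
      split_ifs with hg
      · simpa [hg] using ha
      · simp
    | zero => simp
    | add b c _ _ hb hc =>
      intro g
      rw [toFun_add, map_add]
      exact I.add_mem (hb g) (hc g)
    | smul b c _ hc =>
      intro x
      rw [smul_eq_mul, toFun_mul, map_sum]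
      refine I.sum_mem fun g _ => ?_
      rw [map_mul, ← AlgEquiv.mul_apply, ← map_mul, ← inv_inv g, ← mul_inv_rev, inv_inv]
      exact I.mul_mem_left _ (hc (g⁻¹ * x))
  · intro hb
    rw [← sum_emb_mul_of b]
    refine Ideal.sum_mem _ fun g _ => ?_
    rw [← map_inv_apply_map_apply (σ := σ) g (b.toFun g), ← of_mul_emb]
    exact Ideal.mul_mem_left _ _ (Ideal.mem_map_of_mem _ (hb g))

theorem map_emb_mul_le {I J : Ideal Λ} (hI : ∀ g, ∀ c ∈ I, σ g c ∈ I) :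
    Ideal.map (emb σ) I * Ideal.map (emb σ) J ≤ Ideal.map (emb σ) (I * J) := by
  refine Ideal.mul_le.mpr fun r hr s hs => mem_map_emb_iff.mpr fun x => ?_
  rw [toFun_mul, map_sum]
  refine Ideal.sum_mem _ fun g _ => ?_
  have hrg := hI (x⁻¹ * g) _ (mem_map_emb_iff.mp hr g)
  have hsg := mem_map_emb_iff.mp hs (g⁻¹ * x)
  rw [map_mul, AlgEquiv.mul_apply, map_inv_apply_map_apply] at hrg
  rw [mul_inv_rev, inv_inv, map_mul, AlgEquiv.mul_apply] at hsg
  rw [map_mul]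
  exact Ideal.mul_mem_mul hrg hsg

theorem map_emb_pow_succ_le {J : Ideal Λ} (hJ : ∀ g, ∀ c ∈ J, σ g c ∈ J) (n : ℕ) :
    Ideal.map (emb σ) J ^ (n + 1) ≤ Ideal.map (emb σ) (J ^ (n + 1)) := by
  induction n with
  | zero => rw [zero_add, Submodule.pow_one, Submodule.pow_one]
  | succ n ih =>
    rw [Submodule.pow_succ' _ n.succ_ne_zero, Submodule.pow_succ' _ n.succ_ne_zero]
    exact (Ideal.mul_mono_right ih).trans (map_emb_mul_le hJ)

theorem isNilpotent_map_emb {J : Ideal Λ} (hJ : ∀ g, ∀ c ∈ J, σ g c ∈ J) (hnil : IsNilpotent J) :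
    IsNilpotent (Ideal.map (emb σ) J) := by
  obtain ⟨n, hn⟩ := hnil
  refine ⟨n + 1, le_bot_iff.mp ((map_emb_pow_succ_le hJ n).trans ?_)⟩
  rw [Submodule.pow_succ, hn, zero_mul, Submodule.zero_eq_bot, Ideal.map_bot]

section Conjugation

variable {X Y : Type*} [AddCommGroup X] [AddCommGroup Y] [Module (SGA σ) X] [Module (SGA σ) Y]

theorem of_smul_emb_smul (g : G) (a : Λ) (x : X) :
    of σ g • emb σ a • x = emb σ (σ g a) • of σ g • x := by
  rw [← mul_smul, of_mul_emb, mul_smul]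

/-- An additive map commuting with `Λ` and with the group elements, as a `ΛG`-linear map. -/
def linearMapOfCommute (l : X →+ Y) (hΛ : ∀ (a : Λ) x, l (emb σ a • x) = emb σ a • l x)
    (hG : ∀ g x, l (of σ g • x) = of σ g • l x) : X →ₗ[SGA σ] Y where
  toFun := l
  map_add' := l.map_add
  map_smul' b x := by
    rw [RingHom.id_apply, ← sum_emb_mul_of b, Finset.sum_smul, Finset.sum_smul, map_sum]
    simp_rw [mul_smul, hΛ, hG]

variable (σ) in
/-- The conjugate `x ↦ g • l (g⁻¹ • x)` of an additive map between `ΛG`-modules. -/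
def conj (g : G) (l : X →+ Y) : X →+ Y :=
  (DistribSMul.toAddMonoidHom Y (of σ g)).comp
    (l.comp (DistribSMul.toAddMonoidHom X (of σ g⁻¹)))

theorem conj_apply (g : G) (l : X →+ Y) (x : X) :
    conj σ g l x = of σ g • l (of σ g⁻¹ • x) := rfl

theorem conj_emb_smul {l : X →+ Y} (hl : ∀ (a : Λ) x, l (emb σ a • x) = emb σ a • l x) (g : G)
    (a : Λ) (x : X) : conj σ g l (emb σ a • x) = emb σ a • conj σ g l x := by
  rw [conj_apply, of_smul_emb_smul, hl, of_smul_emb_smul, map_inv_apply_map_apply, conj_apply]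

theorem conj_mul_of_smul (g h : G) (l : X →+ Y) (x : X) :
    conj σ (g * h) l (of σ g • x) = of σ g • conj σ h l x := by
  rw [conj_apply, conj_apply, ← mul_smul, ← map_mul, mul_inv_rev, inv_mul_cancel_right, map_mul,
    mul_smul]

theorem conj_emb_smul_apply (g : G) (a : Λ) (l : X →+ Y) (x : X) :
    conj σ g (emb σ a • l) x = emb σ (σ g a) • conj σ g l x := by
  rw [conj_apply, AddMonoidHom.smul_apply, of_smul_emb_smul, conj_apply]

variable (σ) in
/-- The trace of an additive map between `ΛG`-modules: the sum of its conjugates. -/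
def trace (l : X →+ Y) : X →+ Y :=
  ∑ g, conj σ g l

theorem trace_apply (l : X →+ Y) (x : X) : trace σ l x = ∑ g, conj σ g l x :=
  AddMonoidHom.finsetSum_apply _ _ _

theorem trace_emb_smul {l : X →+ Y} (hl : ∀ (a : Λ) x, l (emb σ a • x) = emb σ a • l x) (a : Λ)
    (x : X) : trace σ l (emb σ a • x) = emb σ a • trace σ l x := by
  simp_rw [trace_apply, conj_emb_smul hl, Finset.smul_sum]

theorem trace_of_smul (l : X →+ Y) (g : G) (x : X) :
    trace σ l (of σ g • x) = of σ g • trace σ l x := by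
  rw [trace_apply, trace_apply, Finset.smul_sum]
  exact (Fintype.sum_equiv (Equiv.mulLeft g) _ _ fun h => (conj_mul_of_smul g h l x).symm).symm

theorem exists_linearMap_eq_sum_smul_conj {J : Ideal Λ} {ε : Λ} (hε : ∑ g, σ g ε = 1)
    (hcomm : ∀ g a, σ g ε * a - a * σ g ε ∈ J) {l : X →+ Y}
    (hl : ∀ (a : Λ) x, l (emb σ a • x) = emb σ a • l x)
    (hJ : ∀ c ∈ J, ∀ g x, emb σ c • conj σ g l x = emb σ c • l x) :
    ∃ L : X →ₗ[SGA σ] Y, ∀ x, L x = ∑ g, emb σ (σ g ε) • conj σ g l x := by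
  have trace_eq (x : X) : trace σ (emb σ ε • l) x = ∑ g, emb σ (σ g ε) • conj σ g l x := by
    simp_rw [trace_apply, conj_emb_smul_apply]
  refine ⟨linearMapOfCommute (trace σ (emb σ ε • l)) (fun a x => ?_) (trace_of_smul _), trace_eq⟩
  rw [trace_eq, trace_eq, ← sub_eq_zero]
  calc ∑ g, emb σ (σ g ε) • conj σ g l (emb σ a • x) -
        emb σ a • ∑ g, emb σ (σ g ε) • conj σ g l x
      = ∑ g, emb σ (σ g ε * a - a * σ g ε) • conj σ g l x := by
        simp_rw [Finset.smul_sum, ← Finset.sum_sub_distrib, conj_emb_smul hl, ← mul_smul,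
          ← sub_smul, ← map_mul, ← map_sub]
    _ = ∑ g, emb σ (σ g ε * a - a * σ g ε) • l x :=
        Finset.sum_congr rfl fun g _ => hJ _ (hcomm g a) g x
    _ = 0 := by
        rw [← Finset.sum_smul, ← map_sum, Finset.sum_sub_distrib, ← Finset.sum_mul,
          ← Finset.mul_sum, hε, one_mul, mul_one, sub_self, map_zero, zero_smul]

theorem sum_emb_smul {ε : Λ} (hε : ∑ g, σ g ε = 1) (x : X) : ∑ g, emb σ (σ g ε) • x = x := by
  rw [← Finset.sum_smul, ← map_sum, hε, map_one, one_smul]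

theorem of_smul_map_of_inv_smul (f : X →ₗ[SGA σ] Y) (g : G) (x : X) :
    of σ g • f (of σ g⁻¹ • x) = f x := by
  rw [← map_smul, ← mul_smul, ← map_mul, mul_inv_cancel, map_one, one_smul]

end Conjugation

section Restriction

/-- The skew group algebra is free over `Λ`, with the group elements as a basis. -/
def resEquiv (σ : G →* (Λ ≃ₐ[k] Λ)) : Res (emb σ) (SGA σ) ≃ₗ[Λ] (G → Λ) where
  __ := equivFun (σ := σ)
  map_add' _ _ := rfl
  map_smul' a b := funext (emb_mul_toFun a b)

theorem projective_res_self : Module.Projective Λ (Res (emb σ) (SGA σ)) :=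
  .of_equiv (resEquiv σ).symm

theorem injective_res_self_iff :
    Module.Injective Λ (Res (emb σ) (SGA σ)) ↔ Module.Injective Λ Λ := by
  constructor <;> intro _
  · exact injective_of_leftInverse (Res.linearMapOfRingHom (emb σ))
      (LinearMap.proj 1 ∘ₗ (resEquiv σ).toLinearMap) fun _ => if_pos rfl
  · exact injective_of_leftInverse (resEquiv σ).toLinearMap (resEquiv σ).symm.toLinearMap
      (resEquiv σ).symm_apply_apply

variable {X Y M : Type} [AddCommGroup X] [AddCommGroup Y] [AddCommGroup M] [Module (SGA σ) X]
  [Module (SGA σ) Y] [Module (SGA σ) M] {J : Ideal Λ} {ε : Λ}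

theorem exists_lift_of_smul_ker_eq_bot [Module.Projective Λ (Res (emb σ) M)]
    (hε : ∑ g, σ g ε = 1) (hcomm : ∀ g a, σ g ε * a - a * σ g ε ∈ J) (π : X →ₗ[SGA σ] Y)
    (f : M →ₗ[SGA σ] Y) (hπ : Function.Surjective π)
    (hker : Ideal.map (emb σ) J • LinearMap.ker π = ⊥) : ∃ L : M →ₗ[SGA σ] X, π ∘ₗ L = f := by
  obtain ⟨l₀, hl₀⟩ :=
    Module.projective_lifting_property (Res.map (emb σ) π) (Res.map (emb σ) f) hπ
  let l : M →+ X := l₀.toAddMonoidHom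
  have map_conj (g : G) (m : M) : π (conj σ g l m) = f m := by
    rw [conj_apply, map_smul, ← of_smul_map_of_inv_smul f g]
    exact congrArg (of σ g • ·) (LinearMap.congr_fun hl₀ (of σ g⁻¹ • m))
  have hJ (c : Λ) (hc : c ∈ J) (g : G) (m : M) : emb σ c • conj σ g l m = emb σ c • l m := by
    have hmem : conj σ g l m - l m ∈ LinearMap.ker π := by
      rw [LinearMap.mem_ker, map_sub, map_conj, sub_eq_zero]
      exact (LinearMap.congr_fun hl₀ m).symm
    rw [← sub_eq_zero, ← smul_sub, ← Submodule.mem_bot (SGA σ), ← hker]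
    exact Submodule.smul_mem_smul (Ideal.mem_map_of_mem _ hc) hmem
  have hl (a : Λ) (m : M) : l (emb σ a • m) = emb σ a • l m := l₀.map_smul a m
  obtain ⟨L, hL⟩ := exists_linearMap_eq_sum_smul_conj hε hcomm hl hJ
  refine ⟨L, LinearMap.ext fun m => ?_⟩
  simp_rw [LinearMap.comp_apply, hL, map_sum, map_smul, map_conj, sum_emb_smul hε]

theorem exists_extend_of_smul_top_le_range [Module.Injective Λ (Res (emb σ) M)]
    (hε : ∑ g, σ g ε = 1) (hcomm : ∀ g a, σ g ε * a - a * σ g ε ∈ J) (i : X →ₗ[SGA σ] Y)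
    (f : X →ₗ[SGA σ] M) (hi : Function.Injective i)
    (hrange : Ideal.map (emb σ) J • ⊤ ≤ LinearMap.range i) :
    ∃ L : Y →ₗ[SGA σ] M, L ∘ₗ i = f := by
  obtain ⟨l₀, hl₀⟩ := Module.Injective.out (Res.map (emb σ) i) hi (Res.map (emb σ) f)
  let l : Y →+ M := l₀.toAddMonoidHom
  have hl (a : Λ) (y : Y) : l (emb σ a • y) = emb σ a • l y := l₀.map_smul a y
  have conj_map (g : G) (x : X) : conj σ g l (i x) = f x := by
    rw [conj_apply, ← map_smul i, ← of_smul_map_of_inv_smul f g]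
    exact congrArg (of σ g • ·) (hl₀ (of σ g⁻¹ • x))
  have hJ (c : Λ) (hc : c ∈ J) (g : G) (y : Y) : emb σ c • conj σ g l y = emb σ c • l y := by
    obtain ⟨x, hx⟩ := hrange (Submodule.smul_mem_smul (Ideal.mem_map_of_mem (emb σ) hc)
      (Submodule.mem_top (x := y)))
    rw [← conj_emb_smul hl, ← hl, ← hx, conj_map]
    exact (hl₀ x).symm
  obtain ⟨L, hL⟩ := exists_linearMap_eq_sum_smul_conj hε hcomm hl hJ
  refine ⟨L, LinearMap.ext fun x => ?_⟩
  simp_rw [LinearMap.comp_apply, hL, conj_map, sum_emb_smul hε]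

/-- The coefficient at `1` of an element of the left ideal of `ΛG` generated by `I`. -/
def coeffOne (I : Ideal Λ) : Ideal.map (emb σ) I →+ I :=
  AddMonoidHom.mk' (fun b => ⟨b.1.toFun 1, by simpa using mem_map_emb_iff.mp b.2 1⟩)
    fun _ _ => rfl

theorem coeffOne_emb_smul {I : Ideal Λ} (a : Λ) (b : Ideal.map (emb σ) I) :
    coeffOne I (emb σ a • b) = a • coeffOne I b :=
  Subtype.ext (emb_mul_toFun a b.1 1)

theorem coeffOne_of_smul_emb {I : Ideal Λ} {a : Λ} (ha : a ∈ I) {g : G} (hg : g ≠ 1) :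
    coeffOne I (of σ g • (⟨emb σ a, Ideal.mem_map_of_mem _ ha⟩ : Ideal.map (emb σ) I)) = 0 := by
  refine Subtype.ext ((of_mul_toFun g (emb σ a) 1).trans ?_)
  rw [emb_toFun, mul_one, if_neg (inv_ne_one.mpr hg), map_zero, ZeroMemClass.coe_zero]

theorem injective_res [Module.Injective (SGA σ) M] : Module.Injective Λ (Res (emb σ) M) := by
  -- The trace of `h` after the coefficient at `1` is `ΛG`-linear and restricts to `h` on `I`.
  refine Module.Baer.injective fun I h => ?_
  let l : Ideal.map (emb σ) I →+ M := AddMonoidHom.comp h.toAddMonoidHom (coeffOne I)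
  have hl (a : Λ) (b) : l (emb σ a • b) = emb σ a • l b :=
    (congrArg h (coeffOne_emb_smul a b)).trans (h.map_smul a _)
  let H := linearMapOfCommute (trace σ l) (trace_emb_smul hl) (trace_of_smul l)
  obtain ⟨F, hF⟩ := Module.Injective.out (Submodule.subtype _) (Submodule.subtype_injective _) H
  refine ⟨Res.map (emb σ) F ∘ₗ Res.linearMapOfRingHom (emb σ), fun a ha => ?_⟩
  let b : Ideal.map (emb σ) I := ⟨emb σ a, Ideal.mem_map_of_mem _ ha⟩
  have conj_eq_zero (g : G) (hg : g ≠ 1) : conj σ g l b = 0 := by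
    rw [conj_apply, show l (of σ g⁻¹ • b) = 0 from
      (congrArg h (coeffOne_of_smul_emb ha (inv_ne_one.mpr hg))).trans h.map_zero, smul_zero]
  have F_emb : F (emb σ a) = l b :=
    calc F (emb σ a) = trace σ l b := hF b
      _ = conj σ 1 l b := by rw [trace_apply, Fintype.sum_eq_single 1 conj_eq_zero]
      _ = l b := by rw [conj_apply, inv_one, map_one, one_smul, one_smul]
  exact F_emb.trans (congrArg h (Subtype.ext (if_pos rfl)))

theorem projective_iff_projective_res (hnil : IsNilpotent J) (hJ : ∀ g, ∀ c ∈ J, σ g c ∈ J)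
    (hε : ∑ g, σ g ε = 1) (hcomm : ∀ g a, σ g ε * a - a * σ g ε ∈ J) :
    Module.Projective (SGA σ) M ↔ Module.Projective Λ (Res (emb σ) M) := by
  have _ := projective_res_self (σ := σ)
  exact ⟨fun _ => Res.projective (emb σ), fun _ =>
    projective_of_exists_lift_of_isNilpotent (isNilpotent_map_emb hJ hnil)
      (exists_lift_of_smul_ker_eq_bot hε hcomm)⟩

theorem injective_iff_injective_res (hnil : IsNilpotent J) (hJ : ∀ g, ∀ c ∈ J, σ g c ∈ J)
    (hε : ∑ g, σ g ε = 1) (hcomm : ∀ g a, σ g ε * a - a * σ g ε ∈ J) :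
    Module.Injective (SGA σ) M ↔ Module.Injective Λ (Res (emb σ) M) :=
  ⟨fun _ => injective_res, fun _ =>
    injective_of_exists_extend_of_isNilpotent (isNilpotent_map_emb hJ hnil)
      (exists_extend_of_smul_top_le_range hε hcomm)⟩

end Restriction

end SGA

theorem map_mem_jacobson {k Λ : Type*} [CommRing k] [Ring Λ] [Algebra k Λ]
    (φ : Λ ≃ₐ[k] Λ) {a : Λ} (ha : a ∈ Ring.jacobson Λ) : φ a ∈ Ring.jacobson Λ :=
  have : RingHomSurjective (φ : Λ →+* Λ) := ⟨φ.surjective⟩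
  Ring.le_comap_jacobson (φ : Λ →+* Λ) ha

theorem IsCompletePrimitiveOrthogonalSystem.completeOrthogonalIdempotents {A : Type} [Ring A]
    {n : ℕ} {e : Fin n → A} (he : IsCompletePrimitiveOrthogonalSystem A e) :
    CompleteOrthogonalIdempotents e :=
  ⟨⟨fun i => (he.1 i).1, fun i j hij => he.2.1 i j hij⟩, he.2.2⟩

theorem skew_group_algebra_projective_injective_restriction_general
    {k Λ S : Type} [CommRing k] [Ring Λ] [Algebra k Λ] [IsArtinianRing Λ]
    (hbasic : IsBasicRing Λ) [Group S] [Fintype S] (σ : S →* (Λ ≃ₐ[k] Λ))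
    {ι : Type*} [Fintype ι] {e : ι → Λ} (he : CompleteOrthogonalIdempotents e)
    (hclosed : ∀ (g : S) (i : ι), ∃ j, σ g (e i) = e j)
    (hfree : ∀ (g : S), g ≠ 1 → ∀ i, σ g (e i) ≠ e i) :
    (∀ (M : Type) [AddCommGroup M] [Module (SGA σ) M],
      (Module.Projective (SGA σ) M ↔ Module.Projective Λ (Res (SGA.emb σ) M)) ∧
        (Module.Injective (SGA σ) M ↔ Module.Injective Λ (Res (SGA.emb σ) M))) ∧
    (Module.Injective (SGA σ) (SGA σ) ↔ Module.Injective Λ Λ) := by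
  obtain ⟨ε, hidem, hε⟩ := exists_isIdempotentElem_sum_eq_one he hclosed hfree
  have hnil : IsNilpotent (Ring.jacobson Λ) := IsSemiprimaryRing.isNilpotent
  have hstable (g : S) (c : Λ) (hc : c ∈ Ring.jacobson Λ) : σ g c ∈ Ring.jacobson Λ :=
    map_mem_jacobson (σ g) hc
  have hcomm (g : S) (a : Λ) : σ g ε * a - a * σ g ε ∈ Ring.jacobson Λ :=
    hbasic.commutator_mem_jacobson (hidem.map (σ g)) a
  exact ⟨fun M _ _ => ⟨SGA.projective_iff_projective_res hnil hstable hε hcomm,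
      SGA.injective_iff_injective_res hnil hstable hε hcomm⟩,
    (SGA.injective_iff_injective_res hnil hstable hε hcomm).trans SGA.injective_res_self_iff⟩

/-- Let `S` be a finite `p`-group (`p = char k`) acting on `Λ`, with a
complete set `E` of primitive orthogonal idempotents closed under the action of `S` on which
`S` acts freely. Then a finitely generated `ΛS`-module is projective (resp. injective) iff its
restriction to `Λ` is projective (resp. injective); in particular `ΛS` is self-injective iff
`Λ` is self-injective. -/
theorem skew_group_algebra_projective_injective_restriction
    (k : Type) [Field k] [IsAlgClosed k] (p : ℕ) [CharP k p]
    (Λ : Type) [Ring Λ] [Algebra k Λ] [FiniteDimensional k Λ]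
    (hconn : IsConnectedRing Λ) (hbasic : IsBasicRing Λ)
    (S : Type) [Group S] [Fintype S] (hp : IsPGroup p S)
    (σ : S →* (Λ ≃ₐ[k] Λ))
    (n : ℕ) (e : Fin n → Λ)
    (hE : IsCompletePrimitiveOrthogonalSystem Λ e)
    (hclosed : ∀ (g : S) (i : Fin n), ∃ j : Fin n, σ g (e i) = e j)
    (hfree : ∀ (g : S), g ≠ 1 → ∀ i : Fin n, σ g (e i) ≠ e i) :
    (∀ (M : Type) [AddCommGroup M] [Module (SGA σ) M], Module.Finite (SGA σ) M →
      ((Module.Projective (SGA σ) M ↔ Module.Projective Λ (Res (SGA.emb σ) M)) ∧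
        (Module.Injective (SGA σ) M ↔ Module.Injective Λ (Res (SGA.emb σ) M)))) ∧
    (Module.Injective (SGA σ) (SGA σ) ↔ Module.Injective Λ Λ) := by
  have _ : IsArtinianRing Λ := isArtinian_of_tower k inferInstance
  have h := skew_group_algebra_projective_injective_restriction_general hbasic σ
    hE.completeOrthogonalIdempotents hclosed hfree
  exact ⟨fun M _ _ _ => h.1 M, h.2⟩
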